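/- arXiv:2106.10180 — 6 statements merged into one kernel-verified Lean document; each statement's English description precedes it below -/
import Mathlib

section
/- If q is odd and (q+1)/2 ≤ k ≤ q-1, then the minimum Hamming distance of the puncture code P(C) of the [q^2+1, k, q^2+2-k]_{q^2} Reed-Solomon code C is exactly (q+1)(k - (q-1)/2). -/
open Polynomial

/-- The codeword of the (extended) `k`-dimensional Reed-Solomon code of length `q² + 1`
associated to a polynomial `f`: the evaluations of `f` at all elements of the field
(enumerated by `a`), followed by the coefficient of `X^(k-1)` in `f`. -/
def rsWord (q k : ℕ) {F : Type} [Field F] (a : Fin (q ^ 2) → F)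
    (f : Polynomial F) (i : Fin (q ^ 2 + 1)) : F :=
  if hi : (i : ℕ) < q ^ 2 then f.eval (a ⟨(i : ℕ), hi⟩) else f.coeff (k - 1)

/-- The puncture code `P(C)` of the `k`-dimensional Reed-Solomon code `C` of length `q² + 1`
over `F = 𝔽_{q²}`: all vectors `λ` with entries in the subfield `𝔽_q` (i.e. `λ_i^q = λ_i`)
such that `∑ λ_i u_i v_i^q = 0` for all codewords `u, v` of `C`. -/
def puncRS (q k : ℕ) {F : Type} [Field F] [Fintype F] (a : Fin (q ^ 2) → F) :
    Set (Fin (q ^ 2 + 1) → F) :=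
  {lam | (∀ i, lam i ^ q = lam i) ∧
    ∀ f g : Polynomial F, f.degree < (k : WithBot ℕ) → g.degree < (k : WithBot ℕ) →
      ∑ i, lam i * rsWord q k a f i * (rsWord q k a g i) ^ q = 0}

/-- The Hamming weight of a vector: the number of its nonzero coordinates. -/
noncomputable def wt {n : ℕ} {F : Type} [Zero F] (v : Fin n → F) : ℕ :=
  Set.ncard {i | v i ≠ 0}

lemma aux_frob {F : Type} [Field F] [Fintype F] {q : ℕ} (hq : IsPrimePow q)
    (hF : Fintype.card F = q ^ 2) : ∃ φ : F →+* F, ∀ x, φ x = x ^ q := by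
  obtain ⟨p, s, hp, hs, rfl⟩ := hq
  have hp' := hp.nat_prime
  obtain ⟨p', hc⟩ := CharP.exists F
  obtain ⟨n, hp'', hn⟩ := FiniteField.card F p'
  have : p' = p := by
    have h1 : p' ∣ (p ^ s) ^ 2 := by
      rw [← hF, hn]; exact dvd_pow_self _ n.ne_zero
    exact (Nat.prime_dvd_prime_iff_eq hp'' hp').1
      (hp''.dvd_of_dvd_pow (hp''.dvd_of_dvd_pow h1))
  subst this
  have := Fact.mk hp'
  exact ⟨iterateFrobenius F p' s, fun x => iterateFrobenius_def p' s x⟩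

lemma aux_rank {F S M : Type} [Field F] [Fintype S] [Fintype M] [DecidableEq S] [DecidableEq M]
    (A B : Matrix M S F)
    (hA : LinearIndependent F A.row) (hB : LinearIndependent F B.row) (h : A * B.transpose = 0) :
    2 * Fintype.card M ≤ Fintype.card S := by
  have h1 := Matrix.rank_add_rank_le_card_of_mul_eq_zero h
  rw [Matrix.rank_transpose, hA.rank_matrix, hB.rank_matrix] at h1
  omega

lemma aux_count1 (h E β α : ℕ) (hβ : β < E) (hα : α ≤ 2 * h + 1) :
    Nat.count (fun k => (β * (2 * h + 1) + k) % (2 * h + 1) < h + 1 ∧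
      (β * (2 * h + 1) + k) / (2 * h + 1) < E) α = min α (h + 1) := by
  induction α with
  | zero => simp
  | succ n ih =>
    rw [Nat.count_succ, ih (by omega)]
    have h1 : (β * (2 * h + 1) + n) % (2 * h + 1) = n := by
      rw [mul_comm, Nat.mul_add_mod]; exact Nat.mod_eq_of_lt (by omega)
    have h2 : (β * (2 * h + 1) + n) / (2 * h + 1) = β := by
      rw [mul_comm, Nat.mul_add_div (by omega), Nat.div_eq_of_lt (by omega)]; simp
    rw [h1, h2]
    simp only [hβ, and_true]
    split_ifs <;> omega

lemma aux_count2 (h E β : ℕ) (hβ : β ≤ E) :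
    Nat.count (fun k => k % (2 * h + 1) < h + 1 ∧ k / (2 * h + 1) < E) (β * (2 * h + 1))
      = β * (h + 1) := by
  induction β with
  | zero => simp
  | succ n ih =>
    rw [show (n + 1) * (2 * h + 1) = n * (2 * h + 1) + (2 * h + 1) by ring, Nat.count_add, ih (by omega), aux_count1 h E n _ (by omega) le_rfl]
    rw [min_eq_right (by omega)]; ring

lemma aux_count3 (h E N : ℕ) (hN : N < 2 * (h + 1) * E) (h0 : 0 < N) :
    N + 1 ≤ 2 * Nat.count (fun k => k % (2 * h + 1) < h + 1 ∧ k / (2 * h + 1) < E) N := by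
  by_cases hc : E * (2 * h + 1) ≤ N
  · have := Nat.count_monotone (fun k => k % (2 * h + 1) < h + 1 ∧ k / (2 * h + 1) < E) hc
    rw [aux_count2 h E E le_rfl] at this
    nlinarith
  · have hd := Nat.div_add_mod N (2 * h + 1)
    have hm := Nat.mod_lt N (show 0 < 2 * h + 1 by omega)
    have hb : N / (2 * h + 1) < E := by
      rw [Nat.div_lt_iff_lt_mul (by omega)]; omega
    generalize N / (2 * h + 1) = β at *
    generalize N % (2 * h + 1) = α at *
    subst hd
    rw [mul_comm _ β, Nat.count_add, aux_count2 h E β hb.le, aux_count1 h E β _ hb hm.le]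
    have e1 : β * (2 * h + 1) = 2 * (β * h) + β := by ring
    have e2 : β * (h + 1) = β * h + β := by ring
    have e3 : (2 * h + 1) * β = 2 * (β * h) + β := by ring
    rw [e1, e2]
    rw [e3] at h0
    rcases Nat.eq_zero_or_pos β with rfl | h'
    · simp at h0 ⊢; omega
    · omega

lemma aux_count4 (h E N : ℕ) (hE : 1 ≤ E) (hN : h + (E - 1) * (2 * h + 1) < N) :
    (h + 1) * E ≤ Nat.count (fun k => k % (2 * h + 1) < h + 1 ∧ k / (2 * h + 1) < E) N := by
  obtain ⟨D, rfl⟩ : ∃ D, E = D + 1 := ⟨E - 1, by omega⟩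
  simp only [Nat.add_sub_cancel] at hN
  have hc : D * (2 * h + 1) + (h + 1) ≤ N := by omega
  have := Nat.count_monotone (fun k => k % (2 * h + 1) < h + 1 ∧ k / (2 * h + 1) < D + 1) hc
  rw [Nat.count_add, aux_count2 h _ D (by omega), aux_count1 h _ D _ (by omega) (by omega)] at this
  rw [min_self] at this
  nlinarith


/-- Values of the monomials used in the lower bound. -/
noncomputable def auxU (q top : ℕ) {F : Type} [Field F] (a : Fin (q ^ 2) → F) (m : ℕ)
    (i : Fin (q ^ 2 + 1)) : F :=
  if hi : (i : ℕ) < q ^ 2 then (a ⟨(i : ℕ), hi⟩) ^ m else if m = top then 1 else 0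

lemma aux_pair (q h E : ℕ) (hqh : q = 2 * h + 1) (hE : 1 ≤ E)
    (F : Type) [Field F] [Fintype F] (hF : Fintype.card F = q ^ 2)
    (a : Fin (q ^ 2) → F) (lam : Fin (q ^ 2 + 1) → F) (hlam : lam ∈ puncRS q (h + E) a)
    (m m' : ℕ) (hm : m % q < h + 1 ∧ m / q < E) (hm' : m' % q < h + 1 ∧ m' / q < E) :
    ∑ i, lam i * auxU q (h + (E - 1) * q) a m i * (auxU q (h + (E - 1) * q) a m' i) ^ q = 0 := by
  have key := hlam.2 (X ^ (m % q + m' / q)) (X ^ (m / q + m' % q))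
    (by rw [degree_X_pow]; exact_mod_cast (by omega))
    (by rw [degree_X_pow]; exact_mod_cast (by omega))
  rw [← key]
  refine Finset.sum_congr rfl fun i _ => ?_
  rw [mul_assoc, mul_assoc]
  congr 1
  unfold auxU rsWord
  have d1 := Nat.div_add_mod m q
  have d2 := Nat.div_add_mod m' q
  have hq0 : q ≠ 0 := by omega
  by_cases hi : (i : ℕ) < q ^ 2
  · simp only [hi, dite_true, eval_pow, eval_X]
    generalize a ⟨(i : ℕ), hi⟩ = x
    have hx : x ^ (q * q) = x := by
      rw [← sq, ← hF]; exact FiniteField.pow_card x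
    conv_lhs => rw [← d1, ← d2]
    generalize m / q = b at *
    generalize m % q = c at *
    generalize m' / q = b' at *
    generalize m' % q = c' at *
    calc x ^ (q * b + c) * (x ^ (q * b' + c')) ^ q
        = x ^ (q * b) * x ^ c * ((x ^ (q * q)) ^ b' * x ^ (c' * q)) := by ring
      _ = x ^ (c + b') * (x ^ (b + c')) ^ q := by rw [hx]; ring
  · simp only [hi, dite_false, coeff_X_pow]
    have t : ∀ n, n % q < h + 1 → (n = h + (E - 1) * q ↔ n % q = h ∧ n / q = E - 1) := by
      intro n hn
      constructor
      · rintro rfl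
        constructor
        · rw [Nat.add_mul_mod_self_right]; exact Nat.mod_eq_of_lt (by omega)
        · rw [Nat.add_mul_div_right _ _ (by omega), Nat.div_eq_of_lt (by omega)]; omega
      · rintro ⟨h1, h2⟩
        conv_lhs => rw [← Nat.div_add_mod n q]
        rw [h1, h2]; ring
    have t1 := t m hm.1
    have t2 := t m' hm'.1
    by_cases c1 : m = h + (E - 1) * q
    · by_cases c2 : m' = h + (E - 1) * q
      · have e1 := t1.1 c1
        have e2 := t2.1 c2
        rw [if_pos c1, if_pos c2, if_pos (by omega), if_pos (by omega)]
      · rw [if_neg c2]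
        have : ¬ (m' % q = h ∧ m' / q = E - 1) := fun hh => c2 (t2.2 hh)
        have e1 := t1.1 c1
        rw [zero_pow hq0, mul_zero]
        by_cases c3 : m' % q = h
        · rw [if_neg (by omega), zero_mul]
        · rw [if_neg (c := h + E - 1 = m / q + m' % q) (by omega), zero_pow hq0, mul_zero]
    · rw [if_neg c1, zero_mul]
      have : ¬ (m % q = h ∧ m / q = E - 1) := fun hh => c1 (t1.2 hh)
      by_cases c3 : m % q = h
      · rw [if_neg (c := h + E - 1 = m / q + m' % q) (by omega), zero_pow hq0, mul_zero]
      · rw [if_neg (by omega), zero_mul]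

lemma aux_key (q h E : ℕ) (hq : IsPrimePow q) (hqh : q = 2 * h + 1) (hE : 1 ≤ E)
    (F : Type) [Field F] [Fintype F] [DecidableEq F] (hF : Fintype.card F = q ^ 2)
    (a : Fin (q ^ 2) → F) (ha : Function.Bijective a)
    (lam : Fin (q ^ 2 + 1) → F) (hlam : lam ∈ puncRS q (h + E) a)
    (M : Finset ℕ) (hM : ∀ m ∈ M, m % q < h + 1 ∧ m / q < E)
    (hM2 : ∀ m ∈ M, m < (Finset.univ.filter fun j : Fin (q ^ 2) => lam j.castSucc ≠ 0).card ∨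
      (lam (Fin.last _) ≠ 0 ∧ m = h + (E - 1) * q)) :
    2 * M.card ≤ wt lam := by
  classical
  obtain ⟨φ, hφ⟩ := aux_frob hq hF
  have hwt : wt lam = Fintype.card {i // lam i ≠ 0} := by
    unfold wt
    rw [← Nat.card_coe_set_eq, Nat.card_eq_fintype_card]
    rfl
  have hMc : M.card = Fintype.card M := by simp
  rw [hwt, hMc]
  -- linear independence
  have indep : ∀ c : M → F,
      (∀ i, lam i ≠ 0 → ∑ m : M, c m * auxU q (h + (E - 1) * q) a m i = 0) → ∀ m, c m = 0 := by
    intro c hc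
    set P : F[X] := ∑ m : M, C (c m) * X ^ (m : ℕ) with hP
    have hcoeff : ∀ m : M, P.coeff m = c m := by
      intro m
      rw [hP, finsetSum_coeff]
      simp only [coeff_C_mul, coeff_X_pow]
      rw [Finset.sum_eq_single m]
      · simp
      · intro b _ hb
        rw [if_neg (fun hh => hb (Subtype.ext hh.symm)), mul_zero]
      · simp
    have htop : lam (Fin.last _) ≠ 0 → ∀ m : M, (m : ℕ) = h + (E - 1) * q → c m = 0 := by
      intro hl m hm
      have := hc _ hl
      rw [Finset.sum_eq_single m] at this
      · simpa [auxU, hm] using this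
      · intro b _ hb
        have : (b : ℕ) ≠ h + (E - 1) * q := fun hh => hb (Subtype.ext (hh.trans hm.symm))
        simp [auxU, this]
      · simp
    suffices P = 0 by
      intro m; rw [← hcoeff, this, coeff_zero]
    set Z := (Finset.univ.filter fun j : Fin (q ^ 2) => lam j.castSucc ≠ 0) with hZ
    refine eq_zero_of_degree_lt_of_eval_finset_eq_zero (s := Z.image a) ?_ ?_
    · rw [Finset.card_image_of_injective _ ha.1]
      rw [degree_lt_iff_coeff_zero]
      intro n hn
      rw [hP, finsetSum_coeff]
      refine Finset.sum_eq_zero fun m _ => ?_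
      rw [coeff_C_mul, coeff_X_pow]
      split_ifs with hnm
      · rcases hM2 m m.2 with h1 | ⟨h1, h2⟩
        · omega
        · rw [htop h1 m h2, zero_mul]
      · simp
    · intro x hx
      obtain ⟨j, hj, rfl⟩ := Finset.mem_image.1 hx
      have hj' : lam j.castSucc ≠ 0 := (Finset.mem_filter.1 hj).2
      rw [← hc _ hj', hP, eval_finsetSum]
      refine Finset.sum_congr rfl fun m _ => ?_
      simp [auxU]
  let A : Matrix M {i // lam i ≠ 0} F := fun m i => auxU q (h + (E - 1) * q) a m i
  let B : Matrix M {i // lam i ≠ 0} F := fun m i => lam i * (auxU q (h + (E - 1) * q) a m i) ^ q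
  refine aux_rank A B ?_ ?_ ?_
  · rw [Fintype.linearIndependent_iff]
    intro c hc
    apply indep c
    intro i hi
    have := congrFun hc ⟨i, hi⟩
    simpa [A, Matrix.row, Finset.sum_apply] using this
  · rw [Fintype.linearIndependent_iff]
    intro c hc
    have hqq : ∀ x : F, φ (x ^ q) = x := by
      intro x
      rw [hφ, ← pow_mul, ← sq, ← hF]; exact FiniteField.pow_card x
    have := indep (fun m => (c m) ^ q) (by
      intro i hi
      have := congrFun hc ⟨i, hi⟩
      have h2 : lam i * ∑ m : M, c m * (auxU q (h + (E - 1) * q) a m i) ^ q = 0 := by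
        rw [Finset.mul_sum]
        simp only [B, Matrix.row, Finset.sum_apply, Pi.smul_apply, smul_eq_mul,
          Pi.zero_apply] at this
        rw [← this]
        exact Finset.sum_congr rfl fun m _ => by ring
      have h3 := (mul_eq_zero.1 h2).resolve_left hi
      apply φ.injective
      rw [map_zero, map_sum, ← h3]
      refine Finset.sum_congr rfl fun m _ => ?_
      rw [map_mul, hqq, hφ])
    intro m
    have hm := this m
    rw [← hqq (c m), hm, map_zero]
  · ext m m'
    rw [Matrix.mul_apply, Matrix.zero_apply]
    have := aux_pair q h E hqh hE F hF a lam hlam m m' (hM _ m.2) (hM _ m'.2)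
    refine Eq.trans ?_ this
    rw [← Finset.sum_filter_of_ne (p := fun i => lam i ≠ 0) (s := Finset.univ)]
    · rw [Finset.sum_subtype (Finset.univ.filter fun i => lam i ≠ 0) (p := fun i => lam i ≠ 0)
        (by simp)]
      refine Finset.sum_congr rfl fun i _ => ?_
      change auxU q (h + (E - 1) * q) a m i * (lam i * auxU q (h + (E - 1) * q) a m' i ^ q) = _
      ring
    · intro i _ hne h0
      exact hne (by rw [h0]; ring)

lemma aux_lower (q h E : ℕ) (hq : IsPrimePow q) (hqh : q = 2 * h + 1) (hE : 1 ≤ E)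
    (F : Type) [Field F] [Fintype F] (hF : Fintype.card F = q ^ 2)
    (a : Fin (q ^ 2) → F) (ha : Function.Bijective a)
    (lam : Fin (q ^ 2 + 1) → F) (hlam : lam ∈ puncRS q (h + E) a) (h0 : lam ≠ 0) :
    2 * (h + 1) * E ≤ wt lam := by
  let _ : DecidableEq F := Classical.decEq F
  set N := (Finset.univ.filter fun j : Fin (q ^ 2) => lam j.castSucc ≠ 0).card with hN
  have hwt : wt lam = N + if lam (Fin.last _) ≠ 0 then 1 else 0 := by
    unfold wt
    rw [Set.ncard_eq_toFinset_card', Set.toFinset_ofPred, Finset.card_filter,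
      Fin.sum_univ_castSucc, ← Finset.card_filter]
  have hpos : 0 < wt lam := by
    unfold wt
    rw [Set.ncard_pos]
    obtain ⟨i, hi⟩ := Function.ne_iff.1 h0
    exact ⟨i, hi⟩
  by_contra hlt
  push Not at hlt
  have key := aux_key q h E hq hqh hE F hF a ha lam hlam
  rw [← hN] at key
  have k1 := key ((Finset.range N).filter fun k => k % q < h + 1 ∧ k / q < E) (fun m hm => (Finset.mem_filter.1 hm).2)
    (fun m hm => Or.inl (Finset.mem_range.1 (Finset.mem_filter.1 hm).1))
  rw [← Nat.count_eq_card_filter_range] at k1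
  have c3 := aux_count3 h E N
  have c4 := aux_count4 h E N hE
  have hcc : Nat.count (fun k => k % (2 * h + 1) < h + 1 ∧ k / (2 * h + 1) < E) N
    = Nat.count (fun k => k % q < h + 1 ∧ k / q < E) N := by
    subst hqh; rfl
  rw [hcc] at c3 c4
  by_cases hl : lam (Fin.last _) = 0
  · simp only [hl, ne_eq, not_true_eq_false, if_false, add_zero] at hwt
    have := c3 (by omega) (by omega)
    omega
  · simp only [hl, ne_eq, not_false_eq_true, if_true] at hwt
    by_cases ht : h + (E - 1) * (2 * h + 1) < N
    · have := c4 ht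
      have e : 2 * (h + 1) * E = 2 * ((h + 1) * E) := by ring
      omega
    · have k2 := key (insert (h + (E - 1) * q) ((Finset.range N).filter fun k => k % q < h + 1 ∧ k / q < E)) (by
        intro m hm
        rcases Finset.mem_insert.1 hm with rfl | hm
        · constructor
          · rw [Nat.add_mul_mod_self_right, Nat.mod_eq_of_lt (by omega)]; omega
          · rw [Nat.add_mul_div_right _ _ (by omega), Nat.div_eq_of_lt (by omega)]; omega
        · exact (Finset.mem_filter.1 hm).2) (by
        intro m hm
        rcases Finset.mem_insert.1 hm with rfl | hm
        · exact Or.inr ⟨hl, rfl⟩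
        · exact Or.inl (Finset.mem_range.1 (Finset.mem_filter.1 hm).1))
      rw [Finset.card_insert_of_notMem (by
        intro hm
        have := Finset.mem_range.1 (Finset.mem_filter.1 hm).1
        rw [hqh] at this
        exact ht this), ← Nat.count_eq_card_filter_range] at k2
      rcases Nat.eq_zero_or_pos N with hz | hz
      · omega
      · have := c3 (by omega) hz
        omega

lemma aux_roots {F : Type} [Field F] [Fintype F] [DecidableEq F] {q h E : ℕ}
    (hqh : q = 2 * h + 1) (h1 : 1 ≤ h)
    (hE : E ≤ h) (hF : Fintype.card F = q ^ 2) :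
    ∃ (ζ : F) (T : Finset F), IsPrimitiveRoot ζ (q + 1) ∧ T.card = E ∧
      ∀ c ∈ T, c ≠ 0 ∧ c ^ h = 1 ∧
        (Finset.univ.filter fun x : F => x ^ (q + 1) = c).card = q + 1 := by
  obtain ⟨g, hg⟩ := IsCyclic.exists_ofOrder_eq_natCard (α := Fˣ)
  have hg2 : orderOf g = (2 * h) * (q + 1) := by
    rw [hg, Nat.card_units, Nat.card_eq_fintype_card, hF, hqh]
    have : (2 * h + 1) ^ 2 = 2 * h * (2 * h + 1 + 1) + 1 := by ring
    omega
  have hω : IsPrimitiveRoot (g : F) ((2 * h) * (q + 1)) := by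
    rw [IsPrimitiveRoot.coe_units_iff, ← hg2]; exact IsPrimitiveRoot.orderOf g
  have hpos : 0 < (2 * h) * (q + 1) := by positivity
  have hζ : IsPrimitiveRoot ((g : F) ^ (2 * h)) (q + 1) := hω.pow hpos rfl
  have hη : IsPrimitiveRoot ((g : F) ^ (2 * (q + 1))) h := hω.pow hpos (by ring)
  refine ⟨_, (Finset.range E).image fun l => ((g : F) ^ (2 * (q + 1))) ^ l, hζ, ?_, ?_⟩
  · rw [Finset.card_image_of_injOn, Finset.card_range]
    intro l hl l' hl' hh
    simp only [Finset.coe_range, Set.mem_Iio] at hl hl'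
    exact hη.pow_inj (by omega) (by omega) hh
  · intro c hc
    obtain ⟨l, -, rfl⟩ := Finset.mem_image.1 hc
    have hne : ((g : F) ^ (2 * (q + 1))) ^ l ≠ 0 := pow_ne_zero _ (pow_ne_zero _ g.ne_zero)
    refine ⟨hne, ?_, ?_⟩
    · rw [← pow_mul, mul_comm l, pow_mul, hη.pow_eq_one, one_pow]
    · have := hζ.card_nthRoots (((g : F) ^ (2 * (q + 1))) ^ l)
      rw [if_pos ⟨((g : F) ^ (2 * l)), by rw [← pow_mul, ← pow_mul]; congr 1; ring⟩] at this
      refine Eq.trans ?_ ((Multiset.toFinset_card_of_nodup (hζ.nthRoots_nodup hne)).trans this)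
      congr 1
      ext x
      simp [mem_nthRoots]

lemma aux_circle {F : Type} [Field F] [Fintype F] [DecidableEq F] {n : ℕ} {ζ : F}
    (hn : 0 < n) (hζ : IsPrimitiveRoot ζ n) (c : F) (m : ℕ) (hm : ¬ n ∣ m) :
    ∑ x ∈ Finset.univ.filter (fun x : F => x ^ n = c), x ^ m = 0 := by
  have hz : ζ ≠ 0 := hζ.ne_zero (by omega)
  have hne : ζ ^ m ≠ 1 := fun hh => hm ((hζ.pow_eq_one_iff_dvd m).1 hh)
  have : ∑ x ∈ Finset.univ.filter (fun x : F => x ^ n = c), x ^ m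
      = ζ ^ m * ∑ x ∈ Finset.univ.filter (fun x : F => x ^ n = c), x ^ m := by
    rw [Finset.mul_sum]
    symm
    refine Finset.sum_nbij' (fun x => ζ * x) (fun x => ζ⁻¹ * x) ?_ ?_ ?_ ?_ ?_
    · intro x hx
      simpa [mul_pow, hζ.pow_eq_one] using hx
    · intro x hx
      simpa [mul_pow, hζ.pow_eq_one] using hx
    · intro x _
      field_simp
    · intro x _
      field_simp
    · intro x _
      rw [mul_pow]
  have h2 : (ζ ^ m - 1) * ∑ x ∈ Finset.univ.filter (fun x : F => x ^ n = c), x ^ m = 0 := by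
    rw [sub_mul, one_mul, ← this, sub_self]
  exact (mul_eq_zero.1 h2).resolve_left (sub_ne_zero.2 hne)

lemma aux_word {F : Type} [Field F] [Fintype F] [DecidableEq F] {q h E : ℕ} (hq : IsPrimePow q)
    (hqh : q = 2 * h + 1) (hE1 : 1 ≤ E) (hE : E ≤ h) (hF : Fintype.card F = q ^ 2) :
    ∃ L : F → F, (∀ x, L x ^ q = L x) ∧
      (∀ i j, i < h + E → j < h + E → ∑ x, L x * (x ^ i * (x ^ j) ^ q) = 0) ∧
      (Finset.univ.filter fun x => L x ≠ 0).card = 2 * (h + 1) * E := by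
  obtain ⟨φ, hφ⟩ := aux_frob hq hF
  obtain ⟨ζ, T, hζ, hTc, hT⟩ := aux_roots hqh (by omega) hE hF
  set D : F → F := fun c => ∏ c' ∈ T.erase c, (c - c') with hD
  have hD0 : ∀ c, D c ≠ 0 := by
    intro c
    rw [hD, Finset.prod_ne_zero_iff]
    intro c' hc'
    exact sub_ne_zero.2 (Finset.ne_of_mem_erase hc').symm
  have hTφ : ∀ c ∈ T, φ c = c := by
    intro c hc
    rw [hφ, hqh, pow_succ, mul_comm 2, pow_mul, (hT c hc).2.1, one_pow, one_mul]
  have hDφ : ∀ c ∈ T, φ (D c) = D c := by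
    intro c hc
    rw [hD, map_prod]
    refine Finset.prod_congr rfl fun c' hc' => ?_
    rw [map_sub, hTφ c hc, hTφ c' (Finset.mem_of_mem_erase hc')]
  have hvan : ∀ t, t + 2 ≤ E → ∑ c ∈ T, c ^ t / D c = 0 := by
    intro t ht
    have := Lagrange.coeff_eq_sum (s := T) (v := fun c : F => c) (fun x _ y _ hxy => hxy)
      (P := X ^ t) (by rw [degree_X_pow, hTc]; exact_mod_cast (by omega))
    rw [coeff_X_pow, if_neg (by omega)] at this
    simpa [hD] using this.symm
  set L : F → F := fun x => if x ^ (q + 1) ∈ T then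
    ((x ^ (q + 1))⁻¹ * (D (x ^ (q + 1)))⁻¹) * x ^ (h + 1) else 0 with hL
  refine ⟨L, ?_, ?_, ?_⟩
  · intro x
    rw [← hφ]
    simp only [hL]
    split_ifs with hx
    · rw [map_mul, map_mul, map_inv₀, map_inv₀, hTφ _ hx, hDφ _ hx, hφ]
      congr 1
      calc (x ^ (h + 1)) ^ q = x ^ (h + 1) * (x ^ (q + 1)) ^ h := by
            rw [← pow_mul, ← pow_mul, ← pow_add, hqh]; congr 1; ring
        _ = x ^ (h + 1) := by rw [(hT _ hx).2.1, mul_one]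
    · exact map_zero φ
  · intro i j hi hj
    have e1 : ∑ x, L x * (x ^ i * (x ^ j) ^ q) =
        ∑ c ∈ T, (c⁻¹ * (D c)⁻¹) *
          ∑ x ∈ Finset.univ.filter (fun x : F => x ^ (q + 1) = c), x ^ (h + 1 + i + j * q) := by
      rw [← Finset.sum_filter_of_ne (p := fun x => x ^ (q + 1) ∈ T) (s := Finset.univ)]
      · rw [← Finset.sum_fiberwise_of_maps_to (t := T) (g := fun x : F => x ^ (q + 1))
          (by intro x hx; exact (Finset.mem_filter.1 hx).2)]
        refine Finset.sum_congr rfl fun c hc => ?_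
        rw [Finset.mul_sum, Finset.filter_filter]
        refine Finset.sum_congr ?_ ?_
        · ext x
          simp only [Finset.mem_filter, Finset.mem_univ, true_and]
          exact ⟨fun hh => hh.2, fun hh => ⟨hh ▸ hc, hh⟩⟩
        · intro x hx
          have hx : x ^ (q + 1) = c := (Finset.mem_filter.1 hx).2
          simp only [hL]
          rw [hx, if_pos hc]
          ring
      · intro x _ hne
        by_contra hx
        exact hne (by simp only [hL]; rw [if_neg hx, zero_mul])
    rw [e1]
    by_cases hdvd : (q + 1) ∣ (h + 1 + i + j * q)
    · -- the exponents which survive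
      have hcase : i + h + 1 = j ∨ i = j + h + 1 := by
        obtain ⟨t, ht⟩ := hdvd
        rw [hqh] at ht
        have ht' : (h : ℤ) + 1 + i - j = (2 * h + 2) * (t - j) := by
          have : ((h + 1 + i + j * (2 * h + 1) : ℕ) : ℤ) = (((2 * h + 1 + 1) * t : ℕ) : ℤ) := by
            rw [ht]
          push_cast at this
          linarith
        have b1 : (t : ℤ) - j < 2 := by
          by_contra hh
          push Not at hh
          nlinarith
        have b2 : (-1 : ℤ) < (t : ℤ) - j := by
          by_contra hh
          push Not at hh
          nlinarith
        have b3 : (t : ℤ) - j = 0 ∨ (t : ℤ) - j = 1 := by omega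
        rcases b3 with b3 | b3
        · rw [b3] at ht'; left; omega
        · rw [b3] at ht'; right; omega
      have e2 : ∃ s, s + 2 ≤ E ∧ ∀ c ∈ T, ∀ x : F, x ^ (q + 1) = c →
          x ^ (h + 1 + i + j * q) = c * c ^ s := by
        rcases hcase with hc | hc
        · refine ⟨i, by omega, ?_⟩
          intro c hcT x hx
          have : h + 1 + i + j * q = (q + 1) * (1 + i + h) := by
            rw [← hc]; ring
          rw [this, pow_mul, hx, pow_add, (hT c hcT).2.1]; ring
        · refine ⟨j, by omega, ?_⟩
          intro c hcT x hx
          have : h + 1 + i + j * q = (q + 1) * (1 + j) := by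
            rw [hc, hqh]; ring
          rw [this, pow_mul, hx, pow_add]; ring
      obtain ⟨s, hs, e2⟩ := e2
      calc _ = ∑ c ∈ T, ((q : F) + 1) * (c ^ s / D c) := by
            refine Finset.sum_congr rfl fun c hc => ?_
            rw [Finset.sum_congr rfl (fun x hx => e2 c hc x (Finset.mem_filter.1 hx).2),
              Finset.sum_const, (hT c hc).2.2, nsmul_eq_mul]
            have := (hT c hc).1
            have := hD0 c
            push_cast
            field_simp
        _ = 0 := by rw [← Finset.mul_sum, hvan s hs, mul_zero]
    · refine Finset.sum_eq_zero fun c _ => ?_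
      rw [aux_circle (by omega) hζ c _ hdvd, mul_zero]
  · have : (Finset.univ.filter fun x => L x ≠ 0)
        = Finset.univ.filter fun x : F => x ^ (q + 1) ∈ T := by
      ext x
      simp only [Finset.mem_filter, Finset.mem_univ, true_and, hL]
      constructor
      · intro hh
        by_contra hx
        exact hh (if_neg hx)
      · intro hx
        rw [if_pos hx]
        have hc := (hT _ hx).1
        have hx0 : x ≠ 0 := by
          rintro rfl
          exact hc (zero_pow (by omega))
        exact mul_ne_zero (mul_ne_zero (inv_ne_zero hc) (inv_ne_zero (hD0 _)))
          (pow_ne_zero _ hx0)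
    rw [this, Finset.card_eq_sum_card_fiberwise (t := T) (f := fun x : F => x ^ (q + 1))
      (by intro x hx; simpa using hx)]
    rw [Finset.sum_congr rfl (g := fun _ => q + 1), Finset.sum_const, hTc, hqh, smul_eq_mul]
    · ring
    · intro c hc
      refine Eq.trans ?_ (hT c hc).2.2
      rw [Finset.filter_filter]
      congr 1
      ext x
      simp only [Finset.mem_filter, Finset.mem_univ, true_and]
      exact ⟨fun hh => hh.2, fun hh => ⟨hh ▸ hc, hh⟩⟩

lemma aux_upper (q h E : ℕ) (hq : IsPrimePow q) (hqh : q = 2 * h + 1) (hE1 : 1 ≤ E) (hE : E ≤ h)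
    (F : Type) [Field F] [Fintype F] (hF : Fintype.card F = q ^ 2)
    (a : Fin (q ^ 2) → F) (ha : Function.Bijective a) :
    ∃ lam ∈ puncRS q (h + E) a, lam ≠ 0 ∧ wt lam = 2 * (h + 1) * E := by
  classical
  obtain ⟨φ, hφ⟩ := aux_frob hq hF
  obtain ⟨L, hL1, hL2, hL3⟩ := aux_word hq hqh hE1 hE hF
  have hq0 : q ≠ 0 := by omega
  set lam : Fin (q ^ 2 + 1) → F :=
    fun i => if hi : (i : ℕ) < q ^ 2 then L (a ⟨(i : ℕ), hi⟩) else 0 with hlam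
  have l1 : ∀ j : Fin (q ^ 2), lam j.castSucc = L (a j) := by
    intro j; simp [hlam]
  have l2 : lam (Fin.last _) = 0 := by simp [hlam]
  have hwt : wt lam = 2 * (h + 1) * E := by
    unfold wt
    rw [Set.ncard_eq_toFinset_card', Set.toFinset_ofPred, Finset.card_filter,
      Fin.sum_univ_castSucc]
    simp only [l1, l2, ne_eq, not_true_eq_false, if_false, add_zero]
    rw [← hL3, Finset.card_filter]
    exact (Equiv.ofBijective a ha).sum_comp (fun x => if L x ≠ 0 then 1 else 0)
  refine ⟨lam, ⟨?_, ?_⟩, ?_, hwt⟩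
  · intro i
    simp only [hlam]
    split_ifs
    · exact hL1 _
    · exact zero_pow hq0
  · intro f g hf hg
    rw [Fin.sum_univ_castSucc, l2, zero_mul, zero_mul, add_zero]
    have r : ∀ (f : F[X]) (j : Fin (q ^ 2)), rsWord q (h + E) a f j.castSucc = f.eval (a j) := by
      intro f j; simp [rsWord]
    simp only [l1, r]
    have e := (Equiv.ofBijective a ha).sum_comp (fun x => L x * f.eval x * (g.eval x) ^ q)
    simp only [Equiv.ofBijective_apply] at e
    rw [e]
    have ev : ∀ (f : F[X]), f.degree < ((h + E : ℕ) : WithBot ℕ) → ∀ x,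
        f.eval x = ∑ i ∈ Finset.range (h + E), f.coeff i * x ^ i := by
      intro f hf x
      refine eval_eq_sum_range' ?_ x
      rcases eq_or_ne f 0 with rfl | hf0
      · simp; omega
      · exact (natDegree_lt_iff_degree_lt hf0).2 hf
    have : ∀ x, L x * f.eval x * (g.eval x) ^ q =
        ∑ i ∈ Finset.range (h + E), ∑ j ∈ Finset.range (h + E),
          (f.coeff i * (g.coeff j) ^ q) * (L x * (x ^ i * (x ^ j) ^ q)) := by
      intro x
      rw [← hφ, ev f hf, ev g hg, map_sum, mul_assoc, Finset.sum_mul_sum, Finset.mul_sum]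
      refine Finset.sum_congr rfl fun i _ => ?_
      rw [Finset.mul_sum]
      refine Finset.sum_congr rfl fun j _ => ?_
      rw [hφ, mul_pow]
      ring
    simp only [this]
    rw [Finset.sum_comm]
    refine Finset.sum_eq_zero fun i hi => ?_
    rw [Finset.sum_comm]
    refine Finset.sum_eq_zero fun j hj => ?_
    rw [← Finset.mul_sum, hL2 i j (Finset.mem_range.1 hi) (Finset.mem_range.1 hj), mul_zero]
  · intro h0
    have : wt lam = 0 := by rw [h0]; simp [wt]
    rw [hwt] at this
    have : 0 < 2 * (h + 1) * E := by positivity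
    omega

/-- If `q` is odd and `(q+1)/2 ≤ k ≤ q-1`, then the minimum Hamming distance
of the puncture code `P(C)` of the `[q²+1, k, q²+2-k]_{q²}` Reed-Solomon code `C` is exactly
`(q+1)(k - (q-1)/2)`. -/
theorem min_distance_puncture_RS_q_odd
    (q k : ℕ) (hq : IsPrimePow q) (hodd : Odd q) (hk1 : q + 1 ≤ 2 * k) (hk2 : k ≤ q - 1)
    (F : Type) [Field F] [Fintype F] (hF : Fintype.card F = q ^ 2)
    (a : Fin (q ^ 2) → F) (ha : Function.Bijective a) :
    (∃ lam ∈ puncRS q k a, lam ≠ 0 ∧ wt lam = (q + 1) * (k - (q - 1) / 2)) ∧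
    (∀ lam ∈ puncRS q k a, lam ≠ 0 → (q + 1) * (k - (q - 1) / 2) ≤ wt lam) := by
  obtain ⟨h, hh⟩ := hodd
  have hk : k = h + (k - h) := by omega
  have e1 : (q - 1) / 2 = h := by omega
  have e2 : (q + 1) * (k - (q - 1) / 2) = 2 * (h + 1) * (k - h) := by rw [e1, hh]; ring
  rw [e2]
  generalize k - h = E at hk
  subst hk
  exact ⟨aux_upper q h E hq hh (by omega) (by omega) F hF a ha,
    fun lam hl h0 => aux_lower q h E hq hh (by omega) F hF a ha lam hl h0⟩
end

section
/- If k = q, then the puncture code P(C) of the [q^2+1, q, q^2+2-q]_{q^2} Reed-Solomon code C is the one-dimensional F_q-subspace spanned by the all-one vector; in particular its minimum Hamming distance is q^2+1. -/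
open Polynomial

lemma rs_sum_split {F : Type} [Field F] [Fintype F] (q : ℕ)
    (a : Fin (q ^ 2) → F) (lam : Fin (q ^ 2 + 1) → F) (f g : Polynomial F) :
    ∑ i, lam i * rsWord q q a f i * (rsWord q q a g i) ^ q =
      (∑ i : Fin (q ^ 2), lam i.castSucc * f.eval (a i) * (g.eval (a i)) ^ q) +
      lam (Fin.last _) * f.coeff (q - 1) * (g.coeff (q - 1)) ^ q := by
  rw [Fin.sum_univ_castSucc]
  congr 1
  · apply Finset.sum_congr rfl
    intro i _
    simp [rsWord]
  · simp [rsWord]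

lemma rs_sum_eval {F : Type} [Field F] [Fintype F] (h : Polynomial F)
    (hd : h.natDegree < Fintype.card F) :
    ∑ x : F, h.eval x = - h.coeff (Fintype.card F - 1) := by
  classical
  have hc : 1 < Fintype.card F := Fintype.one_lt_card
  simp_rw [Polynomial.eval_eq_sum_range' hd]
  rw [Finset.sum_comm]
  obtain ⟨n, hn⟩ : ∃ n, Fintype.card F = n + 1 := ⟨Fintype.card F - 1, by omega⟩
  rw [hn, Finset.sum_range_succ, Finset.sum_eq_zero]
  · rw [← Finset.mul_sum]
    have : ∑ x : F, x ^ n = -1 := by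
      have h1 : ∀ x : F, x ^ n = 1 - (if x = 0 then 1 else 0) := by
        intro x
        split_ifs with hx
        · subst hx
          rw [zero_pow (by omega)]; simp
        · have := FiniteField.pow_card_sub_one_eq_one x hx
          rw [hn] at this
          simpa using this
      simp_rw [h1]
      simp
    rw [this]; simp
  · intro i hi
    rw [← Finset.mul_sum, FiniteField.sum_pow_lt_card_sub_one F i (by
      have := Finset.mem_range.mp hi
      omega), mul_zero]

lemma rs_const {F : Type} [Field F] [Fintype F] (q : ℕ) (hq : 2 ≤ q)
    (hF : Fintype.card F = q ^ 2)
    (a : Fin (q ^ 2) → F) (ha : Function.Bijective a) (c : F) (hc : c ^ q = c) :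
    (fun _ => c) ∈ puncRS q q a := by
  refine ⟨fun _ => hc, fun f g hf hg => ?_⟩
  rw [rs_sum_split]
  have hf' : f.natDegree ≤ q - 1 := by
    rw [Polynomial.natDegree_le_iff_coeff_eq_zero]
    intro N hN
    exact (Polynomial.degree_lt_iff_coeff_zero f q).mp hf N (by omega)
  have hg' : g.natDegree ≤ q - 1 := by
    rw [Polynomial.natDegree_le_iff_coeff_eq_zero]
    intro N hN
    exact (Polynomial.degree_lt_iff_coeff_zero g q).mp hg N (by omega)
  have hgq : (g ^ q).natDegree ≤ q * (q - 1) := Polynomial.natDegree_pow_le_of_le q hg'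
  have hfg : (f * g ^ q).natDegree ≤ (q - 1) + q * (q - 1) :=
    Polynomial.natDegree_mul_le_of_le hf' hgq
  have hqq : (q - 1) + q * (q - 1) = q ^ 2 - 1 := by
    obtain ⟨m, rfl⟩ : ∃ m, q = m + 1 := ⟨q - 1, by omega⟩
    have : (m + 1) ^ 2 = m + (m + 1) * m + 1 := by ring
    rw [this]; simp
  have hpos : 0 < q ^ 2 := by positivity
  have key := rs_sum_eval (f * g ^ q) (by rw [hF]; omega)
  rw [hF, ← hqq, Polynomial.coeff_mul_add_eq_of_natDegree_le hf' hgq,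
    Polynomial.coeff_pow_of_natDegree_le hg'] at key
  have h2 : ∑ i : Fin (q ^ 2), (f * g ^ q).eval (a i) = ∑ x : F, (f * g ^ q).eval x :=
    Function.Bijective.sum_comp ha (fun x => (f * g ^ q).eval x)
  rw [key] at h2
  simp only [Polynomial.eval_mul, Polynomial.eval_pow] at h2
  simp_rw [mul_assoc]
  rw [← Finset.mul_sum, h2]
  simp

lemma rs_mem {F : Type} [Field F] [Fintype F] (q : ℕ) (hq : 2 ≤ q)
    (hF : Fintype.card F = q ^ 2)
    (a : Fin (q ^ 2) → F) (ha : Function.Bijective a) (lam : Fin (q ^ 2 + 1) → F)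
    (h : lam ∈ puncRS q q a) : ∀ j, lam j = lam (Fin.last _) := by
  classical
  obtain ⟨-, h⟩ := h
  have h1 := h 1 1 (by rw [Polynomial.degree_one]; exact_mod_cast (by omega : 0 < q))
    (by rw [Polynomial.degree_one]; exact_mod_cast (by omega : 0 < q))
  rw [rs_sum_split] at h1
  simp only [Polynomial.eval_one, one_pow, mul_one, Polynomial.coeff_one,
    if_neg (show q - 1 ≠ 0 by omega), mul_zero, zero_mul, add_zero] at h1
  intro j
  refine Fin.lastCases rfl (fun j => ?_) j
  set p : Polynomial F := (X - C (a j)) ^ (q - 1) with hp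
  have hm : p.Monic := (Polynomial.monic_X_sub_C _).pow _
  have hnd : p.natDegree = q - 1 := by simp [hp]
  have hd : p.degree < (q : WithBot ℕ) := by
    rw [Polynomial.degree_eq_natDegree hm.ne_zero, hnd]
    exact_mod_cast (by omega : q - 1 < q)
  have h2 := h p p hd hd
  rw [rs_sum_split] at h2
  have hcf : p.coeff (q - 1) = 1 := by rw [← hnd]; exact hm
  have hqq : (q - 1) + (q - 1) * q = q ^ 2 - 1 := by
    obtain ⟨m, rfl⟩ : ∃ m, q = m + 1 := ⟨q - 1, by omega⟩
    have : (m + 1) ^ 2 = m + m * (m + 1) + 1 := by ring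
    rw [this]; simp
  have hev : ∀ i, lam i.castSucc * p.eval (a i) * (p.eval (a i)) ^ q =
      lam (Fin.castSucc i) - if i = j then lam (Fin.castSucc j) else 0 := by
    intro i
    simp only [hp, Polynomial.eval_pow, Polynomial.eval_sub, Polynomial.eval_X,
      Polynomial.eval_C]
    rw [mul_assoc, ← pow_mul, ← pow_add, hqq]
    split_ifs with hij
    · subst hij
      rw [sub_self, zero_pow, mul_zero, sub_self]
      have : 2 ^ 2 ≤ q ^ 2 := Nat.pow_le_pow_left hq 2
      omega
    · have hone := FiniteField.pow_card_sub_one_eq_one (a i - a j)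
        (sub_ne_zero.mpr (fun e => hij (ha.1 e)))
      rw [hF] at hone
      rw [hone]
      simp
  simp_rw [hev] at h2
  rw [Finset.sum_sub_distrib, h1, hcf] at h2
  simp at h2
  linear_combination -h2

/-- If `k = q`, then the puncture code `P(C)` of the
`[q²+1, q, q²+2-q]_{q²}` Reed-Solomon code `C` is the one-dimensional `𝔽_q`-subspace spanned
by the all-one vector, i.e. it consists exactly of the constant vectors with entries in
`𝔽_q`; in particular its minimum Hamming distance is `q² + 1`. -/
theorem puncture_RS_k_eq_q
    (q : ℕ) (hq : IsPrimePow q)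
    (F : Type) [Field F] [Fintype F] (hF : Fintype.card F = q ^ 2)
    (a : Fin (q ^ 2) → F) (ha : Function.Bijective a) :
    puncRS q q a = {lam : Fin (q ^ 2 + 1) → F | ∃ c : F, c ^ q = c ∧ lam = fun _ => c} ∧
    (∃ lam ∈ puncRS q q a, lam ≠ 0 ∧ wt lam = q ^ 2 + 1) ∧
    (∀ lam ∈ puncRS q q a, lam ≠ 0 → q ^ 2 + 1 ≤ wt lam) := by
  have hq2 : 2 ≤ q := hq.two_le
  have heq : puncRS q q a =
      {lam : Fin (q ^ 2 + 1) → F | ∃ c : F, c ^ q = c ∧ lam = fun _ => c} := by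
    ext lam
    constructor
    · intro h
      exact ⟨lam (Fin.last _), h.1 _, funext (rs_mem q hq2 hF a ha lam h)⟩
    · rintro ⟨c, hc, rfl⟩
      exact rs_const q hq2 hF a ha c hc
  have hwt : ∀ c : F, c ≠ 0 → wt (fun _ : Fin (q ^ 2 + 1) => c) = q ^ 2 + 1 := by
    intro c hc
    simp [wt, hc, Set.ncard_univ]
  refine ⟨heq, ⟨fun _ => 1, rs_const q hq2 hF a ha 1 (one_pow _), ?_, hwt 1 one_ne_zero⟩, ?_⟩
  · intro h
    exact one_ne_zero (congrFun h 0)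
  · intro lam hl hne
    rw [heq] at hl
    obtain ⟨c, -, rfl⟩ := hl
    rw [hwt c]
    rintro rfl
    exact hne rfl
end

section
/- Suppose q = 2^r where r is odd. If e ∈ F_{q^2} satisfies e^{q+1} = 1 and e^{(q+1)/3} ≠ 1, then the polynomial e·X^3 + e^q·X^{3q} + X^{q+1} + 1 has no zeros in F_{q^2}. -/
/-- Suppose `q = 2^r` where `r` is odd.  If `e ∈ 𝔽_{q²}` satisfies
`e^(q+1) = 1` and `e^((q+1)/3) ≠ 1`, then the polynomial `e·X³ + e^q·X^(3q) + X^(q+1) + 1`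
has no zeros in `𝔽_{q²}`. -/
theorem no_zeros_poly_q_even
    (r q : ℕ) (hr : Odd r) (hq : q = 2 ^ r)
    (F : Type) [Field F] [Fintype F] (hF : Fintype.card F = q ^ 2)
    (e : F) (he1 : e ^ (q + 1) = 1) (he2 : e ^ ((q + 1) / 3) ≠ 1) :
    ∀ x : F, e * x ^ 3 + e ^ q * x ^ (3 * q) + x ^ (q + 1) + 1 ≠ 0 := by
  intro x hx
  have h2 : (2 : F) = 0 := by
    have h : ((Fintype.card F : ℕ) : F) = 0 := Nat.cast_card_eq_zero F
    rw [hF, hq] at h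
    push_cast at h
    exact eq_zero_of_pow_eq_zero (eq_zero_of_pow_eq_zero h)
  have he0 : e ≠ 0 := by
    rintro rfl
    simp at he1
  have hk : ∃ k, q = 3 * k + 2 := by
    obtain ⟨m, rfl⟩ := hr
    have h4 : 4 ^ m % 3 = 1 := by simp [Nat.pow_mod]
    have : q = 2 * 4 ^ m := by rw [hq, pow_succ, pow_mul]; norm_num; ring
    exact ⟨(q - 2) / 3, by omega⟩
  obtain ⟨k, hk⟩ := hk
  -- the key step: `e` is a cube in `F`
  have hcube : ∃ c : F, c ^ 3 = e := by
    have hq1 : e ^ q * e = 1 := by rw [← pow_succ, he1]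
    have hx' : e * x ^ 3 + e ^ q * (x ^ q) ^ 3 + x ^ q * x + 1 = 0 := by
      rw [← pow_mul, mul_comm q 3, ← pow_succ]; exact hx
    generalize x ^ q = y at hx'
    generalize e ^ q = f at hx' hq1
    have hN : e ^ 2 * x ^ 3 + y ^ 3 + e * x * y + e = 0 := by
      linear_combination e * hx' - y ^ 3 * hq1
    by_cases hxy : x * y + 1 = 0
    · refine ⟨y, ?_⟩
      have hs : (y ^ 3 - e) ^ 2 = 0 := by
        have hxy1 : x * y = 1 := by linear_combination hxy - h2
        have h3 : x ^ 3 * y ^ 3 = 1 := by rw [← mul_pow, hxy1, one_pow]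
        linear_combination y ^ 3 * hN - e ^ 2 * h3 - e * y ^ 3 * hxy1 + (- 2 * e * y ^ 3) * h2
      exact sub_eq_zero.1 (eq_zero_of_pow_eq_zero hs)
    · refine ⟨(y + x ^ 2 * e) / (x * y + 1), ?_⟩
      rw [div_pow, div_eq_iff (pow_ne_zero 3 hxy)]
      linear_combination (1 + e * x ^ 3) * hN + (2 * x ^ 2 * e * y ^ 2 + 2 * x ^ 4 * e ^ 2 * y - e * x ^ 3 * y ^ 3 - 2 * e * x ^ 2 * y ^ 2 - 2 * e * x * y - e - e ^ 2 * x ^ 3 - e ^ 2 * x ^ 4 * y) * h2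
  obtain ⟨c, rfl⟩ := hcube
  have hc0 : c ≠ 0 := by
    rintro rfl
    simp at he0
  have hc := FiniteField.pow_card_sub_one_eq_one c hc0
  have hd : (q + 1) / 3 = k + 1 := by omega
  rw [hd] at he2
  have hexp : Fintype.card F - 1 = 3 * (k + 1) * (3 * k + 1) := by
    rw [hF, hk]
    have : (3 * k + 2) ^ 2 = 3 * (k + 1) * (3 * k + 1) + 1 := by ring
    omega
  rw [hexp, pow_mul, pow_mul] at hc
  have hw3 : ((c ^ 3) ^ (k + 1)) ^ 3 = 1 := by
    rw [← pow_mul, ← he1, hk]; congr 1; ring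
  rw [pow_succ, pow_mul, hw3, one_pow, one_mul] at hc
  exact he2 hc
end

section
/- If q = 2^r and r ≥ 3 is odd, then there exists a Hermitian self-orthogonal [q^2+1, q-1, q^2-q+3]_{q^2} generalised Reed-Solomon code; that is, there exist nonzero θ_1, …, θ_{q^2+1} ∈ F_{q^2} such that the code {(θ_1 f(a_1), …, θ_{q^2} f(a_{q^2}), θ_{q^2+1} f_{q-2}) : f ∈ F_{q^2}[X], deg f ≤ q-2} is Hermitian self-orthogonal. -/
open Polynomial

/-- A zero of `Tr(t) + s + 1` with `s ^ 3 = N(t)` forces `t` to be a cube. -/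
lemma grs_cube_aux {F : Type} [Field F] [CharP F 2] (t t' s : F) (hs : t * t' = s ^ 3)
    (h0 : t + t' + s + 1 = 0) : ∃ y : F, t = y ^ 3 := by
  have h2 : (2 : F) = 0 := by exact_mod_cast CharP.cast_eq_zero F 2
  have ht' : t' = t + s + 1 := by linear_combination h0 - (t + s + 1) * h2
  subst ht'
  by_cases h1 : s + 1 = 0
  · have hs1 : s = 1 := by linear_combination h1 - h2
    subst hs1
    refine ⟨1, ?_⟩
    have : (t + 1) ^ 2 = 0 := by linear_combination hs + h2
    have h3 : t + 1 = 0 := by simpa using this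
    linear_combination h3 - h2
  · refine ⟨(t + s) / (s + 1), ?_⟩
    rw [div_pow, eq_div_iff (pow_ne_zero 3 h1)]
    have key : t ^ 2 = (s + 1) * t + s ^ 3 := by
      linear_combination hs - (s + 1) * t * h2
    linear_combination -(t + 4 * s + 1) * key -
      (2 * s * (s + 1) * t + 2 * s ^ 4 + s ^ 3 - s * t) * h2

/-- Power sums over a finite field below twice the order of the unit group. -/
lemma grs_sum_pow {F : Type} [Field F] [Fintype F] (n Q : ℕ) (hF : Fintype.card F = Q + 1)
    (h1 : n ≠ Q) (h2 : n < 2 * Q) : ∑ x : F, x ^ n = 0 := by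
  classical
  by_cases hn : n = 0
  · subst hn; exact FiniteField.sum_pow_lt_card_sub_one F 0 (by omega)
  have h3 : ∑ x : F, x ^ n = ∑ x : Fˣ, (x ^ n : F) := by
    have := Fintype.sum_eq_add_sum_subtype_ne (fun x : F => x ^ n) 0
    rw [this, zero_pow hn, zero_add]
    symm
    exact Fintype.sum_equiv unitsEquivNeZero _ _ (fun x => by simp)
  rw [h3, FiniteField.sum_pow_units, if_neg]
  rintro ⟨c, hc⟩
  rw [hF] at hc
  simp only [Nat.add_sub_cancel] at hc
  have : c < 2 := by
    by_contra hcc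
    have : Q * 2 ≤ Q * c := Nat.mul_le_mul_left _ (by omega)
    omega
  interval_cases c <;> simp_all

lemma grs_sum_pow_top {F : Type} [Field F] [Fintype F] [CharP F 2] (Q : ℕ)
    (hF : Fintype.card F = Q + 1) (hQ : Q ≠ 0) : ∑ x : F, x ^ Q = 1 := by
  classical
  have h3 : ∑ x : F, x ^ Q = ∑ x : Fˣ, (x ^ Q : F) := by
    have := Fintype.sum_eq_add_sum_subtype_ne (fun x : F => x ^ Q) 0
    rw [this, zero_pow hQ, zero_add]
    symm
    exact Fintype.sum_equiv unitsEquivNeZero _ _ (fun x => by simp)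
  rw [h3, FiniteField.sum_pow_units, if_pos (by simp [hF])]
  exact CharTwo.neg_eq 1

/-- Elements of the subfield of order `q` are norms. -/
lemma grs_norm {F : Type} [Field F] [Fintype F] (q : ℕ) (hq : 2 ≤ q)
    (hF : Fintype.card F = q ^ 2) (l : F) (hl : l ≠ 0) (h : l ^ q = l) :
    ∃ θ : F, θ ≠ 0 ∧ θ ^ (q + 1) = l := by
  classical
  obtain ⟨g, hg⟩ := IsCyclic.exists_generator (α := Fˣ)
  have ho : orderOf g = (q + 1) * (q - 1) := by
    rw [orderOf_eq_card_of_forall_mem_zpowers hg, Nat.card_eq_fintype_card, Fintype.card_units, hF]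
    have := Nat.sq_sub_sq q 1
    simpa using this
  obtain ⟨k, hk⟩ := (mem_powers_iff_mem_zpowers.mpr (hg (Units.mk0 l hl)))
  simp only at hk
  have h1 : (Units.mk0 l hl) ^ (q - 1) = 1 := by
    apply Units.ext
    have : l ^ (q - 1) * l = 1 * l := by
      rw [← pow_succ, one_mul, Nat.sub_add_cancel (by omega), h]
    simpa using mul_right_cancel₀ hl this
  rw [← hk, ← pow_mul] at h1
  have h2 := orderOf_dvd_of_pow_eq_one h1
  rw [ho] at h2
  obtain ⟨m, rfl⟩ := Nat.dvd_of_mul_dvd_mul_right (by omega) h2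
  refine ⟨((g ^ m : Fˣ) : F), Units.ne_zero _, ?_⟩
  have : l = ((Units.mk0 l hl : Fˣ) : F) := rfl
  rw [this, ← hk]
  push_cast
  rw [← pow_mul, mul_comm]

lemma grs_beta {F : Type} [Field F] [Fintype F] (q : ℕ) (hq : 2 ≤ q) (hq3 : q % 3 = 2)
    (hF : Fintype.card F = q ^ 2) :
    ∃ β : F, β ^ (q + 1) = 1 ∧ ∀ y : F, β ≠ y ^ 3 := by
  classical
  obtain ⟨g, hg⟩ := IsCyclic.exists_generator (α := Fˣ)
  have ho : orderOf g = (q + 1) * (q - 1) := by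
    rw [orderOf_eq_card_of_forall_mem_zpowers hg, Nat.card_eq_fintype_card, Fintype.card_units, hF]
    have := Nat.sq_sub_sq q 1
    simpa using this
  refine ⟨((g ^ (q - 1) : Fˣ) : F), ?_, ?_⟩
  · rw [← Units.val_pow_eq_pow_val, ← pow_mul, mul_comm, ← ho, pow_orderOf_eq_one]; rfl
  · intro y hy
    have hy0 : y ≠ 0 := by
      rintro rfl
      rw [zero_pow (by norm_num)] at hy
      exact Units.ne_zero _ hy
    obtain ⟨k, hk⟩ := (mem_powers_iff_mem_zpowers.mpr (hg (Units.mk0 y hy0)))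
    simp only at hk
    have h1 : g ^ (q - 1) = g ^ (k * 3) := by
      rw [pow_mul, hk]
      apply Units.ext
      simpa using hy
    rw [pow_eq_pow_iff_modEq, ho] at h1
    have h3 : 3 ∣ (q + 1) * (q - 1) := Dvd.dvd.mul_right (by omega) _
    have h4 : (q - 1) % 3 = (k * 3) % 3 := h1.of_dvd h3
    omega

/-- If `q = 2^r` and `r ≥ 3` is odd, then there is a Hermitian
self-orthogonal `[q²+1, q-1, q²-q+3]_{q²}` generalised Reed-Solomon code: there exist nonzero
`θ_1, …, θ_{q²+1} ∈ 𝔽_{q²}` such that the code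
`{(θ_1 f(a_1), …, θ_{q²} f(a_{q²}), θ_{q²+1} f_{q-2}) : f ∈ 𝔽_{q²}[X], deg f ≤ q-2}`
is Hermitian self-orthogonal. -/
theorem hermitian_selforthogonal_GRS_length_q_sq_plus_one
    (r q : ℕ) (hr3 : 3 ≤ r) (hr : Odd r) (hq : q = 2 ^ r)
    (F : Type) [Field F] [Fintype F] (hF : Fintype.card F = q ^ 2)
    (a : Fin (q ^ 2) → F) (ha : Function.Bijective a) :
    ∃ θ : Fin (q ^ 2 + 1) → F, (∀ i, θ i ≠ 0) ∧
      ∀ f g : Polynomial F,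
        f.degree < ((q - 1 : ℕ) : WithBot ℕ) → g.degree < ((q - 1 : ℕ) : WithBot ℕ) →
        ∑ i, (θ i * rsWord q (q - 1) a f i) * (θ i * rsWord q (q - 1) a g i) ^ q = 0 := by
  classical
  have hr0 : 8 ≤ q := by
    rw [hq]; calc 8 = 2 ^ 3 := by norm_num
      _ ≤ 2 ^ r := Nat.pow_le_pow_right (by norm_num) hr3
  have hq3 : q % 3 = 2 := by
    obtain ⟨m, rfl⟩ := hr
    rw [hq, pow_succ, pow_mul, Nat.mul_mod, Nat.pow_mod]
    norm_num
  have : Fact (Nat.Prime 2) := ⟨Nat.prime_two⟩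
  have hchar : CharP F 2 := by
    have h : Fintype.card F = 2 ^ (r * 2) := by rw [hF, hq, pow_mul]
    exact charP_of_card_eq_prime_pow h
  have h2 : (2 : F) = 0 := by exact_mod_cast CharP.cast_eq_zero F 2
  have frob : ∀ x y : F, (x + y) ^ q = x ^ q + y ^ q := by
    intro x y; rw [hq]; exact add_pow_char_pow x y 2 r
  have hqq : ∀ x : F, (x ^ q) ^ q = x := by
    intro x
    rw [← pow_mul, ← sq, ← hF]; exact FiniteField.pow_card x
  obtain ⟨β, hβ1, hβ⟩ := grs_beta (F := F) q (by omega) hq3 hF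
  have hβ0 : β ≠ 0 := by
    rintro rfl; exact hβ 0 (by simp)
  let lam : F → F := fun x => β * x ^ 3 + (β * x ^ 3) ^ q + x ^ (q + 1) + 1
  have hlam0 : ∀ x, lam x ≠ 0 := by
    intro x h
    have hx : x ≠ 0 := by
      rintro rfl
      have : q ≠ 0 := by omega
      simp [lam, this] at h
    obtain ⟨y, hy⟩ := grs_cube_aux (β * x ^ 3) ((β * x ^ 3) ^ q) (x ^ (q + 1)) (by
      rw [← pow_succ', mul_pow, hβ1, one_mul, ← pow_mul, ← pow_mul, mul_comm]) h
    apply hβ (y / x)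
    rw [div_pow, ← hy]
    field_simp
  have hlamq : ∀ x, lam x ^ q = lam x := by
    intro x
    have e : (x ^ (q + 1)) ^ q = x ^ (q + 1) := by
      rw [pow_succ, mul_pow, hqq, mul_comm]
    simp only [lam]
    rw [frob, frob, frob, hqq, e, one_pow]
    ring
  choose θ hθ0 hθ using fun x => grs_norm q (by omega) hF (lam x) (hlam0 x) (hlamq x)
  have hcard : Fintype.card F = (q ^ 2 - 1) + 1 := by
    have : 0 < q ^ 2 := by positivity
    omega
  have hQ : q ^ 2 = q * q := sq q
  have hmono : ∀ i < q - 1, ∀ j < q - 1, ∑ x : F, lam x * (x ^ i * (x ^ j) ^ q) =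
      if i = q - 2 ∧ j = q - 2 then 1 else 0 := by
    intro i hi j hj
    obtain ⟨p, rfl⟩ : ∃ p, q = p + 2 := ⟨q - 2, by omega⟩
    have hjq : j * (p + 2) ≤ p * (p + 2) := Nat.mul_le_mul_right _ (by omega)
    have hpp : 6 * p ≤ p * p := Nat.mul_le_mul_right _ (by omega)
    have hQ' : (p + 2) ^ 2 = p * p + 4 * p + 4 := by ring
    have expand : ∀ x : F, lam x * (x ^ i * (x ^ j) ^ (p + 2)) =
        β * x ^ (i + j * (p + 2) + 3) + β ^ (p + 2) * x ^ (i + (j + 3) * (p + 2))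
          + x ^ (i + 1 + (j + 1) * (p + 2)) + x ^ (i + j * (p + 2)) := by
      intro x; simp only [lam]; ring
    simp only [expand, Finset.sum_add_distrib, ← Finset.mul_sum]
    have e1 : ∑ x : F, x ^ (i + j * (p + 2) + 3) = 0 :=
      grs_sum_pow _ _ hcard (by grind) (by grind)
    have e2 : ∑ x : F, x ^ (i + (j + 3) * (p + 2)) = 0 := by
      apply grs_sum_pow _ _ hcard
      · intro h
        have h5 : (i + 1) + (p + 2) * (j + 3) = (p + 2) * (p + 2) := by grind
        have h6 : (i + 1) % (p + 2) = 0 := by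
          have := congrArg (· % (p + 2)) h5
          simpa [Nat.add_mul_mod_self_left] using this
        rw [Nat.mod_eq_of_lt (by omega)] at h6
        omega
      · grind
    have e4 : ∑ x : F, x ^ (i + j * (p + 2)) = 0 :=
      grs_sum_pow _ _ hcard (by grind) (by grind)
    rw [e1, e2, e4]
    split_ifs with hc
    · obtain ⟨h3, h4⟩ := hc
      have : i + 1 + (j + 1) * (p + 2) = (p + 2) ^ 2 - 1 := by
        have h3' : i = p := by omega
        have h4' : j = p := by omega
        rw [h3', h4', hQ']
        have : (p + 1) * (p + 2) = p * p + 3 * p + 2 := by ring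
        omega
      rw [this, grs_sum_pow_top _ hcard (by omega)]
      ring
    · have e3 : ∑ x : F, x ^ (i + 1 + (j + 1) * (p + 2)) = 0 := by
        apply grs_sum_pow _ _ hcard
        · intro h
          apply hc
          by_cases hj' : j = p
          · subst hj'
            have : (j + 1) * (j + 2) = j * j + 3 * j + 2 := by ring
            omega
          · have : (j + 1) * (p + 2) ≤ p * (p + 2) := Nat.mul_le_mul_right _ (by omega)
            have : p * (p + 2) = p * p + 2 * p := by ring
            omega
        · have : (j + 1) * (p + 2) ≤ (p + 1) * (p + 2) := Nat.mul_le_mul_right _ (by omega)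
          have : (p + 1) * (p + 2) = p * p + 3 * p + 2 := by ring
          omega
      rw [e3]; ring
  have hsumpow : ∀ (n : ℕ) (c : ℕ → F), (∑ i ∈ Finset.range n, c i) ^ q
      = ∑ i ∈ Finset.range n, c i ^ q := by
    intro n c; rw [hq]; exact sum_pow_char_pow _ _ _ _
  refine ⟨fun i => if hi : (i : ℕ) < q ^ 2 then θ (a ⟨i, hi⟩) else 1, ?_, ?_⟩
  · intro i
    dsimp only
    split_ifs
    · exact hθ0 _
    · exact one_ne_zero
  · intro f g hf hg
    have hq1 : q - 1 ≠ 0 := by omega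
    have hfn : f.natDegree < q - 1 := by
      by_cases h : f = 0
      · subst h; simp; omega
      · exact (Polynomial.natDegree_lt_iff_degree_lt h).2 hf
    have hgn : g.natDegree < q - 1 := by
      by_cases h : g = 0
      · subst h; simp; omega
      · exact (Polynomial.natDegree_lt_iff_degree_lt h).2 hg
    rw [Fin.sum_univ_castSucc]
    have hs : ∑ x : F, lam x * (f.eval x * (g.eval x) ^ q) =
        f.coeff (q - 2) * g.coeff (q - 2) ^ q := by
      have : ∀ x : F, lam x * (f.eval x * (g.eval x) ^ q) =
          ∑ i ∈ Finset.range (q - 1), ∑ j ∈ Finset.range (q - 1),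
            (f.coeff i * g.coeff j ^ q) * (lam x * (x ^ i * (x ^ j) ^ q)) := by
        intro x
        rw [Polynomial.eval_eq_sum_range' hfn, Polynomial.eval_eq_sum_range' hgn, hsumpow,
          Finset.sum_mul_sum, Finset.mul_sum]
        refine Finset.sum_congr rfl fun i _ => ?_
        rw [Finset.mul_sum]
        refine Finset.sum_congr rfl fun j _ => ?_
        rw [mul_pow]; ring
      simp only [this]
      rw [Finset.sum_comm]
      have e : ∀ i ∈ Finset.range (q - 1), (∑ x : F, ∑ j ∈ Finset.range (q - 1),
            (f.coeff i * g.coeff j ^ q) * (lam x * (x ^ i * (x ^ j) ^ q))) =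
          if i = q - 2 then f.coeff (q - 2) * g.coeff (q - 2) ^ q else 0 := by
        intro i hi
        rw [Finset.sum_comm]
        have e' : ∀ j ∈ Finset.range (q - 1), (∑ x : F,
            (f.coeff i * g.coeff j ^ q) * (lam x * (x ^ i * (x ^ j) ^ q))) =
            if j = q - 2 then (if i = q - 2 then f.coeff (q - 2) * g.coeff (q - 2) ^ q else 0)
              else 0 := by
          intro j hj
          rw [← Finset.mul_sum, hmono i (Finset.mem_range.1 hi) j (Finset.mem_range.1 hj)]
          split_ifs <;> simp_all
        rw [Finset.sum_congr rfl e', Finset.sum_ite_eq', if_pos (Finset.mem_range.2 (by omega))]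
      rw [Finset.sum_congr rfl e, Finset.sum_ite_eq', if_pos (Finset.mem_range.2 (by omega))]
    have hmain : ∑ i : Fin (q ^ 2), θ (a i) * f.eval (a i) * (θ (a i) * g.eval (a i)) ^ q =
        f.coeff (q - 2) * g.coeff (q - 2) ^ q := by
      rw [← hs]
      refine Fintype.sum_bijective a ha _ _ fun i => ?_
      rw [← hθ (a i)]; ring
    have hq2 : q - 1 - 1 = q - 2 := by omega
    simp only [rsWord, Fin.val_castSucc, Fin.is_lt, dif_pos, Fin.eta, Fin.val_last, lt_irrefl,
      dif_neg, not_false_eq_true, one_mul, hq2]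
    rw [hmain]
    linear_combination f.coeff (q - 2) * g.coeff (q - 2) ^ q * h2
end

section
/- Let q = 2^h, let q/2 ≤ k ≤ q-1, and let R be a subset of {e ∈ F_q : tr_{q→2}(e) = 1} of size q-k-1. Define g(X) = tr_{q→2}(X)·∏_{e ∈ R}(X^q + X + e) ∈ F_{q^2}[X]. Then the function x ↦ g(x) + g(x)^q has exactly q(q-k-1) + q^2/2 distinct zeros in F_{q^2}. -/
open Polynomial in
lemma aux_trace_roots {F : Type} [Field F] [Fintype F] [DecidableEq F] (n : ℕ) :
    (Finset.univ.filter (fun x : F => ∑ j ∈ Finset.range (n + 1), x ^ (2 ^ j) = 0)).card ≤ 2 ^ n := by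
  set p : F[X] := ∑ j ∈ Finset.range (n + 1), X ^ (2 ^ j) with hp
  have hp0 : p ≠ 0 := by
    intro h0
    have h1 : p.coeff 1 = 1 := by
      rw [hp, finset_sum_coeff, Finset.sum_eq_single 0]
      · simp
      · intro j _ hj
        rw [coeff_X_pow, if_neg]
        intro h
        have := Nat.one_lt_two_pow hj
        omega
      · simp
    rw [h0] at h1
    simp at h1
  have hdeg : p.natDegree ≤ 2 ^ n := by
    apply natDegree_sum_le_of_forall_le
    intro j hj
    rw [natDegree_X_pow]
    apply Nat.pow_le_pow_right (by norm_num)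
    have := Finset.mem_range.1 hj
    omega
  refine le_trans ?_ hdeg
  refine card_le_degree_of_subset_roots ?_
  intro x hx
  have hx' := (Finset.mem_filter.1 hx).2
  rw [mem_roots hp0, IsRoot, hp, eval_finset_sum]
  simpa using hx'

open Polynomial in
lemma aux_frob_roots {F : Type} [Field F] [Fintype F] [DecidableEq F] (q : ℕ) (hq : 1 < q) :
    (Finset.univ.filter (fun x : F => x ^ q + x = 0)).card ≤ q := by
  have hd : (X ^ q + X : F[X]).natDegree = q := by
    rw [natDegree_add_eq_left_of_natDegree_lt] <;> simp [hq]
  have hp0 : (X ^ q + X : F[X]) ≠ 0 := by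
    intro h
    rw [h] at hd
    simp at hd
    omega
  refine le_trans ?_ hd.le
  refine card_le_degree_of_subset_roots ?_
  intro x hx
  have hx' := (Finset.mem_filter.1 hx).2
  rw [mem_roots hp0, IsRoot]
  simpa using hx'

lemma aux_ker_range {F : Type} [Field F] [Fintype F] [DecidableEq F] (f : F →+ F) :
    (Finset.univ.filter (fun x : F => f x = 0)).card * (Finset.univ.image f).card
      = Fintype.card F := by
  have h := Finset.card_eq_sum_card_image f (Finset.univ : Finset F)
  rw [Finset.card_univ] at h
  rw [h, Finset.sum_const_nat (m := (Finset.univ.filter (fun x : F => f x = 0)).card), mul_comm]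
  intro y hy
  obtain ⟨x, -, rfl⟩ := Finset.mem_image.1 hy
  exact AddMonoidHom.card_fiber_eq_of_mem_range f ⟨x, rfl⟩ ⟨0, map_zero f⟩

/-- Let `q = 2^h`, let `q/2 ≤ k ≤ q-1`, and let `R` be a subset of
`{e ∈ 𝔽_q : tr_{q→2}(e) = 1}` of size `q - k - 1`, where `tr_{q→2}(X) = ∑_{j=0}^{h-1} X^(2^j)`
is the trace from `𝔽_q` to `𝔽_2`.  Define `g(X) = tr_{q→2}(X)·∏_{e ∈ R}(X^q + X + e)`.
Then the function `x ↦ g(x) + g(x)^q` has exactly `q(q-k-1) + q²/2` distinct zeros in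
`𝔽_{q²}`. -/
theorem zeros_count_q_even
    (q h k : ℕ) (hh : 1 ≤ h) (hq : q = 2 ^ h) (hk1 : q ≤ 2 * k) (hk2 : k ≤ q - 1)
    (F : Type) [Field F] [Fintype F] (hF : Fintype.card F = q ^ 2)
    (R : Finset F) (hRcard : R.card = q - k - 1)
    (hR : ∀ e ∈ R, e ^ q = e ∧ ∑ j ∈ Finset.range h, e ^ (2 ^ j) = 1) :
    Set.ncard {x : F |
        (∑ j ∈ Finset.range h, x ^ (2 ^ j)) * (∏ e ∈ R, (x ^ q + x + e))
          + ((∑ j ∈ Finset.range h, x ^ (2 ^ j)) * (∏ e ∈ R, (x ^ q + x + e))) ^ q = 0}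
      = q * (q - k - 1) + q ^ 2 / 2 := by
  classical
  have hq1 : 1 < q := by rw [hq]; exact Nat.one_lt_two_pow (by omega)
  have h2 : (2 : F) = 0 := by
    have h := Nat.cast_card_eq_zero F
    rw [hF, hq] at h
    push_cast at h
    exact pow_eq_zero_iff (by omega) |>.1 (pow_eq_zero_iff (by omega) |>.1 h)
  haveI : CharP F 2 := CharTwo.of_one_ne_zero_of_two_eq_zero one_ne_zero h2
  haveI : Fact (Nat.Prime 2) := ⟨Nat.prime_two⟩
  have hqq : ∀ x : F, (x ^ q) ^ q = x := by
    intro x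
    rw [← pow_mul, ← sq, ← hF, FiniteField.pow_card]
  have hadd : ∀ x y : F, (x + y) ^ q = x ^ q + y ^ q := by
    intro x y
    rw [hq]; exact add_pow_char_pow x y 2 h
  -- the maps
  let L : F →+ F := AddMonoidHom.mk' (fun x => x ^ q + x) (by
    intro a b
    simp only [hadd]; ring)
  have hL : ∀ x, L x = x ^ q + x := fun x => rfl
  let T : F →+ F := AddMonoidHom.mk' (fun x => ∑ j ∈ Finset.range h, x ^ (2 ^ j)) (by
    intro a b
    simp only [add_pow_char_pow, Finset.sum_add_distrib])
  have hT : ∀ x, T x = ∑ j ∈ Finset.range h, x ^ (2 ^ j) := fun x => rfl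
  have hTq : ∀ x, (T x) ^ q = T (x ^ q) := by
    intro x
    rw [hT, hT, hq, sum_pow_char_pow]
    refine Finset.sum_congr rfl fun j _ => ?_
    rw [← pow_mul, ← pow_mul, mul_comm]
  have hTL : ∀ x, T (L x) = ∑ j ∈ Finset.range (2 * h - 1 + 1), x ^ (2 ^ j) := by
    intro x
    rw [show 2 * h - 1 + 1 = h + h by omega, Finset.sum_range_add, hL, map_add, hT, hT, add_comm]
    congr 1
    refine Finset.sum_congr rfl fun j _ => ?_
    rw [hq, ← pow_mul, pow_add]
  have hLq : ∀ x, (L x) ^ q = L x := by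
    intro x
    rw [hL, hadd, hqq, add_comm]
  have hTLsq : ∀ y, y ^ q = y → T y = 0 ∨ T y = 1 := by
    intro y hy
    have h1 : (T y) ^ 2 = T y := by
      have e1 : (T y) ^ 2 = ∑ j ∈ Finset.range h, y ^ (2 ^ (j + 1)) := by
        rw [hT, sum_pow_char]
        refine Finset.sum_congr rfl fun j _ => ?_
        rw [← pow_mul, pow_succ]
      have e2 := Finset.sum_range_succ (fun j => y ^ (2 ^ j)) h
      rw [Finset.sum_range_succ', ← e1, ← hq, hy, ← hT] at e2
      simpa using e2
    have : T y * (T y - 1) = 0 := by linear_combination h1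
    rcases mul_eq_zero.1 this with h | h
    · exact Or.inl h
    · exact Or.inr (sub_eq_zero.1 h)
  -- kernel of L
  have hKle := aux_frob_roots (F := F) q hq1
  have hKm := aux_ker_range L
  rw [hF] at hKm
  simp only [hL] at hKm
  set K := Finset.univ.filter (fun x : F => x ^ q + x = 0) with hK
  have hsub : Finset.univ.image L ⊆ K := by
    intro y hy
    obtain ⟨x, -, rfl⟩ := Finset.mem_image.1 hy
    simp only [hK, Finset.mem_filter, Finset.mem_univ, true_and]
    rw [hLq]; exact CharTwo.add_self_eq_zero _
  have hrle := Finset.card_le_card hsub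
  have hKq : K.card = q := by nlinarith
  have hrq : (Finset.univ.image L).card = q := by
    rw [hKq] at hKm
    nlinarith
  have him : Finset.univ.image L = K := Finset.eq_of_subset_of_card_le hsub (by omega)
  -- kernel of T ∘ L
  have hA : (Finset.univ.filter (fun x : F => T (L x) = 0)).card = q ^ 2 / 2 := by
    have h1 := aux_trace_roots (F := F) (2 * h - 1)
    simp only [← hTL] at h1
    have h3 := aux_ker_range (T.comp L)
    simp only [AddMonoidHom.comp_apply] at h3
    have h4 : (Finset.univ.image (T.comp L)).card ≤ 2 := by
      refine le_trans (Finset.card_le_card (t := {0, 1}) ?_) Finset.card_le_two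
      intro y hy
      obtain ⟨x, -, rfl⟩ := Finset.mem_image.1 hy
      simpa using hTLsq (L x) (hLq x)
    have h5 : q ^ 2 = 2 * 2 ^ (2 * h - 1) := by
      rw [hq, ← pow_mul, ← pow_succ']
      congr 1; omega
    rw [hF] at h3
    have h6 := Nat.mul_le_mul_left (Finset.univ.filter (fun x : F => T (L x) = 0)).card h4
    rw [h3] at h6
    omega
  have hB : (Finset.univ.filter (fun x : F => L x ∈ R)).card = q * (q - k - 1) := by
    rw [← hRcard, mul_comm, Finset.card_eq_sum_card_fiberwise (f := L) (t := R)
      (fun x hx => by simpa using hx)]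
    apply Finset.sum_const_nat
    intro e he
    have heK : e ∈ Finset.univ.image L := by
      rw [him]
      simp only [hK, Finset.mem_filter, Finset.mem_univ, true_and]
      rw [(hR e he).1]; exact CharTwo.add_self_eq_zero _
    obtain ⟨x, -, hx⟩ := Finset.mem_image.1 heK
    rw [Finset.filter_filter]
    have h7 := AddMonoidHom.card_fiber_eq_of_mem_range L ⟨x, hx⟩ ⟨0, map_zero L⟩
    rw [← hKq, hK]
    simp only [hL] at h7 ⊢
    rw [← h7]
    congr 1
    ext a
    simp only [Finset.mem_filter, Finset.mem_univ, true_and]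
    exact ⟨fun h => h.2, fun h => ⟨by rw [h]; exact he, h⟩⟩
  have hset : {x : F |
        (∑ j ∈ Finset.range h, x ^ (2 ^ j)) * (∏ e ∈ R, (x ^ q + x + e))
          + ((∑ j ∈ Finset.range h, x ^ (2 ^ j)) * (∏ e ∈ R, (x ^ q + x + e))) ^ q = 0}
      = ((Finset.univ.filter (fun x : F => L x ∈ R) ∪
          Finset.univ.filter (fun x : F => T (L x) = 0) : Finset F) : Set F) := by
    ext x
    simp only [Set.mem_setOf_eq, Finset.coe_union, Set.mem_union, Finset.mem_coe,
      Finset.mem_filter, Finset.mem_univ, true_and]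
    rw [← hT, ← hL]
    have hP : (∏ e ∈ R, (L x + e)) ^ q = ∏ e ∈ R, (L x + e) := by
      rw [← Finset.prod_pow]
      refine Finset.prod_congr rfl fun e he => ?_
      rw [hadd, hLq, (hR e he).1]
    have hfac : T x * (∏ e ∈ R, (L x + e)) + (T x * (∏ e ∈ R, (L x + e))) ^ q
        = (∏ e ∈ R, (L x + e)) * T (L x) := by
      rw [mul_pow, hP, hTq, hL, map_add]; ring
    rw [hfac, mul_eq_zero, Finset.prod_eq_zero_iff]
    refine or_congr ⟨?_, ?_⟩ Iff.rfl
    · rintro ⟨e, he, h⟩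
      rw [CharTwo.add_eq_zero] at h
      rwa [h]
    · intro h
      exact ⟨_, h, CharTwo.add_self_eq_zero _⟩
  rw [hset, Set.ncard_coe_finset, Finset.card_union_of_disjoint, hA, hB]
  rw [Finset.disjoint_left]
  intro x hx hx'
  have e1 := (hR _ (Finset.mem_filter.1 hx).2).2
  have e2 := (Finset.mem_filter.1 hx').2
  rw [hT, e1] at e2
  exact one_ne_zero e2
end

section
/- Let q be an odd prime power, let (q+1)/2 ≤ k ≤ q-1, and let R be a subset of F_q of size q-k-1 such that e^{(q-1)/2} = 1 for all e ∈ R. Define g(X) = X^{(q+1)/2}·∏_{e ∈ R}(X^{q+1} - e) ∈ F_{q^2}[X]. Then the function x ↦ g(x) + g(x)^q has exactly (q^2+1)/2 + (q-k-1)(q+1) distinct zeros in F_{q^2}. -/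
open Classical in
lemma card_pow_fiber {F : Type} [Field F] [Fintype F] (n m : ℕ) (hnm : n * m = Fintype.card F - 1)
    (e : F) (he : e ^ m = 1) :
    (Finset.univ.filter (fun x : F => x ^ n = e)).card = n := by
  have hpos : 0 < Fintype.card F - 1 := by
    have := Fintype.one_lt_card (α := F); omega
  have hn : 0 < n := by
    rcases Nat.eq_zero_or_pos n with h | h
    · subst h; omega
    · exact h
  have hm : 0 < m := by
    rcases Nat.eq_zero_or_pos m with h | h
    · subst h; omega
    · exact h
  obtain ⟨g, hg⟩ := IsCyclic.exists_generator (α := Fˣ)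
  have hord : orderOf g = n * m := by
    rw [orderOf_eq_card_of_forall_mem_zpowers hg, Nat.card_eq_fintype_card, Fintype.card_units, hnm]
  have he0 : e ≠ 0 := by
    rintro rfl
    rw [zero_pow hm.ne'] at he
    exact zero_ne_one he
  have hprim : IsPrimitiveRoot (g : F) (n * m) := by
    rw [← hord]
    exact IsPrimitiveRoot.coe_units_iff.mpr (IsPrimitiveRoot.orderOf g)
  have hprimn : IsPrimitiveRoot ((g : F) ^ m) n :=
    hprim.pow (Nat.mul_pos hn hm) (by ring)
  have hex : ∃ α : F, α ^ n = e := by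
    have h1 : e ^ (n * m) = 1 := by rw [mul_comm, pow_mul, he, one_pow]
    have : NeZero (n * m) := ⟨(Nat.mul_pos hn hm).ne'⟩
    obtain ⟨j, -, hj⟩ := hprim.eq_pow_of_pow_eq_one h1
    have h2 : (g : F) ^ (j * m) = 1 := by rw [pow_mul, hj, he]
    have h3 := (hprim.pow_eq_one_iff_dvd _).1 h2
    obtain ⟨c, rfl⟩ := Nat.dvd_of_mul_dvd_mul_right hm h3
    exact ⟨(g : F) ^ c, by rw [← hj, ← pow_mul, mul_comm]⟩
  have hc := hprimn.card_nthRoots e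
  rw [if_pos hex] at hc
  have hnd := hprimn.nthRoots_nodup he0
  rw [← Multiset.toFinset_card_of_nodup hnd] at hc
  conv_rhs => rw [← hc]
  congr 1
  ext x
  simp [Polynomial.mem_nthRoots hn]

lemma frob_q {F : Type} [Field F] [Fintype F] (q : ℕ) (hq : IsPrimePow q)
    (hF : Fintype.card F = q ^ 2) : ∃ φ : F →+* F, ∀ x, φ x = x ^ q := by
  obtain ⟨p, r, hp, hr, rfl⟩ := hq
  obtain ⟨p', hp'⟩ := CharP.exists F
  obtain ⟨n, hpp, hn⟩ := FiniteField.card F p'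
  have : p' = p := by
    have : p' ∣ p := by
      apply hpp.dvd_of_dvd_pow (n := r * 2)
      rw [pow_mul, ← hF, hn]
      exact dvd_pow_self _ n.pos.ne'
    exact (Nat.prime_dvd_prime_iff_eq hpp hp.nat_prime).1 this
  subst this
  have := Fact.mk hpp
  exact ⟨iterateFrobenius F p' r, fun x => by simp [iterateFrobenius_def]⟩


/-- Let `q` be an odd prime power, let `(q+1)/2 ≤ k ≤ q-1`, and let `R` be
a subset of `𝔽_q` of size `q - k - 1` such that `e^((q-1)/2) = 1` for all `e ∈ R`.  Define
`g(X) = X^((q+1)/2)·∏_{e ∈ R}(X^(q+1) - e)`.  Then the function `x ↦ g(x) + g(x)^q` has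
exactly `(q²+1)/2 + (q-k-1)(q+1)` distinct zeros in `𝔽_{q²}`. -/
theorem zeros_count_q_odd
    (q k : ℕ) (hq : IsPrimePow q) (hodd : Odd q) (hk1 : q + 1 ≤ 2 * k) (hk2 : k ≤ q - 1)
    (F : Type) [Field F] [Fintype F] (hF : Fintype.card F = q ^ 2)
    (R : Finset F) (hRcard : R.card = q - k - 1)
    (hR : ∀ e ∈ R, e ^ q = e ∧ e ^ ((q - 1) / 2) = 1) :
    Set.ncard {x : F |
        x ^ ((q + 1) / 2) * (∏ e ∈ R, (x ^ (q + 1) - e))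
          + (x ^ ((q + 1) / 2) * (∏ e ∈ R, (x ^ (q + 1) - e))) ^ q = 0}
      = (q ^ 2 + 1) / 2 + (q - k - 1) * (q + 1) := by
  classical
  obtain ⟨φ, hφ⟩ := frob_q q hq hF
  obtain ⟨t, rfl⟩ := hodd
  have ht : 0 < t := by
    rcases Nat.eq_zero_or_pos t with h | h
    · subst h; omega
    · exact h
  have e1 : (2 * t + 1 + 1) / 2 = t + 1 := by omega
  have e2 : (2 * t + 1 - 1) / 2 = t := by omega
  have e3 : ((2 * t + 1) ^ 2 + 1) / 2 = 1 + 2 * t * (t + 1) := by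
    have : (2 * t + 1) ^ 2 + 1 = 2 * (1 + 2 * t * (t + 1)) := by ring
    omega
  have hcard : Fintype.card F - 1 = 2 * (2 * t * (t + 1)) := by
    rw [hF]
    have : (2 * t + 1) ^ 2 = 2 * (2 * t * (t + 1)) + 1 := by ring
    omega
  rw [e1, e3]
  rw [e2] at hR
  have hxq : ∀ x : F, x ^ ((2 * t + 1) * (2 * t + 1)) = x := fun x => by
    rw [← sq, ← hF]; exact FiniteField.pow_card x
  have hPq : ∀ x : F, (∏ e ∈ R, (x ^ (2 * t + 1 + 1) - e)) ^ (2 * t + 1)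
      = ∏ e ∈ R, (x ^ (2 * t + 1 + 1) - e) := by
    intro x
    rw [← hφ, map_prod]
    refine Finset.prod_congr rfl fun e he => ?_
    rw [map_sub, hφ e, (hR e he).1, map_pow, hφ, ← pow_mul, mul_add, pow_add, hxq, mul_one]
    ring
  have h20 : (2 : F) ≠ 0 := by
    intro h
    have h2 : ((Fintype.card F : ℕ) : F) = 0 := Nat.cast_card_eq_zero F
    rw [hF] at h2
    push_cast at h2
    rw [h] at h2
    simp at h2
  have hset : {x : F | x ^ (t + 1) * (∏ e ∈ R, (x ^ (2 * t + 1 + 1) - e))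
          + (x ^ (t + 1) * (∏ e ∈ R, (x ^ (2 * t + 1 + 1) - e))) ^ (2 * t + 1) = 0}
      = (({0} ∪ (Finset.univ.filter (fun x : F => x ^ (2 * t * (t + 1)) = -1))) ∪
        R.biUnion (fun e => Finset.univ.filter (fun x : F => x ^ (2 * t + 1 + 1) = e)) :
          Finset F) := by
    ext x
    have : x ^ (t + 1) * (∏ e ∈ R, (x ^ (2 * t + 1 + 1) - e))
          + (x ^ (t + 1) * (∏ e ∈ R, (x ^ (2 * t + 1 + 1) - e))) ^ (2 * t + 1)
        = x ^ (t + 1) * (x ^ (2 * t * (t + 1)) + 1) *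
          ∏ e ∈ R, (x ^ (2 * t + 1 + 1) - e) := by
      rw [mul_pow, hPq]; ring
    rw [Set.mem_ofPred_eq, this]
    simp [Finset.prod_eq_zero_iff, sub_eq_zero, add_eq_zero_iff_eq_neg, or_assoc]
  have hfib : ∀ x : F, ∀ e ∈ R, x ^ (2 * t + 1 + 1) = e → x ^ (2 * t * (t + 1)) = 1 := by
    intro x e he h
    rw [← (hR e he).2, ← h]; ring
  rw [hset, Set.ncard_coe_finset, Finset.card_union_of_disjoint, Finset.card_union_of_disjoint,
    Finset.card_biUnion, Finset.card_singleton, card_pow_fiber _ 2 (by rw [hcard]; ring) _ (by ring),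
    Finset.sum_congr rfl (fun e he => card_pow_fiber _ (2 * t) (by rw [hcard]; ring) e
      (by rw [mul_comm, pow_mul, (hR e he).2, one_pow])), Finset.sum_const, hRcard, smul_eq_mul]
  · intro a _ b _ hab
    simp only [Function.onFun]
    rw [Finset.disjoint_left]
    intro x hx hy
    simp only [Finset.mem_filter] at hx hy
    exact hab (hx.2.symm.trans hy.2)
  · rw [Finset.disjoint_singleton_left]
    simp [ht.ne']
  · rw [Finset.disjoint_left]
    intro x hx hy
    simp only [Finset.mem_biUnion, Finset.mem_filter, Finset.mem_univ, true_and] at hy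
    obtain ⟨e, he, hxe⟩ := hy
    have h1 := hfib x e he hxe
    simp only [Finset.mem_union, Finset.mem_singleton, Finset.mem_filter, Finset.mem_univ,
      true_and] at hx
    rcases hx with rfl | hx
    · simp [ht.ne'] at h1
    · rw [h1] at hx
      apply h20
      linear_combination hx
end
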